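/- There is a universal constant c > 0 such that for every probability density f on ℝ and every r > 0, the Fisher information of the r-smoothed density satisfies I_r ≥ c/(IQR + r)², where IQR is the interquartile range of f. -/

import Mathlib

/-!
The Fisher information is bounded below by testing the score against a bounded increasing
function. Writing `g = f_r`, for every bounded smooth `φ` and every real `t` one has
`s_r² g ≥ -2 t φ g' - t² φ² g` pointwise (expand `(s_r + t φ)² g ≥ 0`), so integration by parts
gives `I_r ≥ 2 t ∫ g φ' - t² ∫ φ² g`. The choice is `φ(x) = arctan ((x - q₁) / L)` with `q₁` the
first quartile of `f` and `L = IQR + r`: then `φ² ≤ 4`, while `φ' ≥ 1 / (2 L)` on `[q₁ - L, q₁ + L]`.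

A fixed fraction of the mass of `g` lies in that interval (`exists_bump`): with probability at least
`1 / 2` the variable `Y` lies between the two quartiles, and independently `|Z| ≤ r` with probability
at least `1 / 3`. Concretely, `g` dominates the convolution of `f` restricted to `[q₁, q₃]` with the
Gaussian restricted to `[-r, r]`, and the integral of a convolution is the product of the integrals.
Hence `∫ g φ' ≥ 1 / (12 L)`, and optimizing in `t` gives the bound.

Since the Bochner integral of a non-integrable function is zero, the finiteness of the Fisher
information is needed as well. It follows from the Cauchy–Schwarz inequality
`(g')² ≤ g · (f * (u² / r⁴ · gaussian))` (`sq_smoothedDeriv_le`).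
-/


open MeasureTheory Real

noncomputable section

/-- The Gaussian density with mean 0 and variance `r ^ 2`. -/
def gaussPdf (r x : ℝ) : ℝ :=
  Real.exp (-(x ^ 2) / (2 * r ^ 2)) / Real.sqrt (2 * Real.pi * r ^ 2)

/-- The `r`-smoothed density `f_r`, i.e. the density of `Y + Z` where `Y ~ f` and
`Z ~ N(0, r²)` independent. -/
def smoothed (f : ℝ → ℝ) (r x : ℝ) : ℝ := ∫ y, f y * gaussPdf r (x - y)

/-- The score function `s_r = f_r' / f_r` of the smoothed density. -/
def score (f : ℝ → ℝ) (r x : ℝ) : ℝ :=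
  deriv (fun t => smoothed f r t) x / smoothed f r x

/-- The Fisher information `I_r = E_{x ~ f_r}[s_r(x)²]` of the smoothed density. -/
def fisherInfo (f : ℝ → ℝ) (r : ℝ) : ℝ := ∫ x, score f r x ^ 2 * smoothed f r x

/-- `f` is a probability density on `ℝ`. -/
def IsDensity (f : ℝ → ℝ) : Prop :=
  (∀ x, 0 ≤ f x) ∧ MeasureTheory.Integrable f ∧ (∫ x, f x) = 1

/-- The `p`-th quantile of a density `f` on `ℝ`. -/
def quantile (f : ℝ → ℝ) (p : ℝ) : ℝ := sInf {t : ℝ | p ≤ ∫ x in Set.Iic t, f x}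

/-- The interquartile range of a density: the distance between the 25th and
75th percentiles. -/
def iqr (f : ℝ → ℝ) : ℝ := quantile f (3 / 4) - quantile f (1 / 4)

open Filter Set Topology

/-! ### The Gaussian density and its derivative -/

/-- The derivative of the Gaussian density `gaussPdf r`. -/
def gaussDeriv (r u : ℝ) : ℝ := -(u / r ^ 2) * gaussPdf r u

/-- The square of the Gaussian score times the Gaussian density. -/
def gaussSq (r u : ℝ) : ℝ := (u / r ^ 2) ^ 2 * gaussPdf r u

lemma gaussPdf_pos {r : ℝ} (hr : 0 < r) (u : ℝ) : 0 < gaussPdf r u := by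
  unfold gaussPdf; positivity

lemma continuous_gaussPdf (r : ℝ) : Continuous (gaussPdf r) := by
  unfold gaussPdf; fun_prop

lemma continuous_gaussDeriv (r : ℝ) : Continuous (gaussDeriv r) := by
  unfold gaussDeriv; have := continuous_gaussPdf r; fun_prop

lemma continuous_gaussSq (r : ℝ) : Continuous (gaussSq r) := by
  unfold gaussSq; have := continuous_gaussPdf r; fun_prop

lemma hasDerivAt_gaussPdf {r : ℝ} (hr : 0 < r) (u : ℝ) :
    HasDerivAt (gaussPdf r) (gaussDeriv r u) u := by
  have h1 : HasDerivAt (fun x : ℝ => -(x ^ 2) / (2 * r ^ 2)) (-(2 * u) / (2 * r ^ 2)) u := by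
    simpa using ((hasDerivAt_pow 2 u).neg).div_const (2 * r ^ 2)
  refine (h1.exp.div_const _).congr_deriv ?_
  unfold gaussDeriv gaussPdf
  field_simp

lemma gaussPdf_eq {r : ℝ} :
    gaussPdf r = ProbabilityTheory.gaussianPDFReal 0 (r ^ 2).toNNReal := by
  ext u
  simp only [gaussPdf, ProbabilityTheory.gaussianPDFReal, Real.coe_toNNReal _ (sq_nonneg r), sub_zero]
  rw [div_eq_mul_inv, mul_comm]

lemma integrable_gaussPdf (r : ℝ) : Integrable (gaussPdf r) := by
  rw [gaussPdf_eq]; exact ProbabilityTheory.integrable_gaussianPDFReal _ _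

lemma integral_gaussPdf {r : ℝ} (hr : 0 < r) : ∫ u, gaussPdf r u = 1 := by
  rw [gaussPdf_eq]
  refine ProbabilityTheory.integral_gaussianPDFReal_eq_one 0 ?_
  exact (Real.toNNReal_pos.2 (by positivity)).ne'

lemma exp_form (r u : ℝ) : -(u ^ 2) / (2 * r ^ 2) = -(1 / (2 * r ^ 2)) * u ^ 2 := by ring

lemma integrable_gaussDeriv {r : ℝ} (hr : 0 < r) : Integrable (gaussDeriv r) := by
  have h := integrable_mul_exp_neg_mul_sq (b := 1 / (2 * r ^ 2)) (by positivity)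
  refine (h.const_mul (-(1 / r ^ 2) / Real.sqrt (2 * Real.pi * r ^ 2))).congr
    (Eventually.of_forall fun u => ?_)
  simp only [gaussDeriv, gaussPdf, exp_form]
  ring

lemma integrable_gaussSq {r : ℝ} (hr : 0 < r) : Integrable (gaussSq r) := by
  have h := integrable_rpow_mul_exp_neg_mul_sq (b := 1 / (2 * r ^ 2)) (by positivity)
    (s := 2) (by norm_num)
  refine (h.const_mul ((1 / r ^ 2) ^ 2 / Real.sqrt (2 * Real.pi * r ^ 2))).congr
    (Eventually.of_forall fun u => ?_)
  simp only [gaussSq, gaussPdf, exp_form, Real.rpow_two]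
  ring

lemma gaussPdf_bdd {r : ℝ} (u : ℝ) :
    ‖gaussPdf r u‖ ≤ 1 / Real.sqrt (2 * Real.pi * r ^ 2) := by
  rw [Real.norm_of_nonneg (by unfold gaussPdf; positivity)]
  unfold gaussPdf
  gcongr
  rw [Real.exp_le_one_iff]
  exact div_nonpos_of_nonpos_of_nonneg (by nlinarith [sq_nonneg u]) (by positivity)

lemma gaussSq_bdd {r : ℝ} (hr : 0 < r) (u : ℝ) :
    ‖gaussSq r u‖ ≤ 2 / r ^ 2 / Real.sqrt (2 * Real.pi * r ^ 2) := by
  have hg := (gaussPdf_pos hr u).le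
  rw [Real.norm_of_nonneg (by unfold gaussSq; positivity)]
  unfold gaussSq gaussPdf
  rw [← mul_div_assoc]
  gcongr
  -- `a * exp (-a) ≤ 1` with `a = u² / (2 r²)`
  have h1 := Real.add_one_le_exp (u ^ 2 / (2 * r ^ 2))
  have h2 : Real.exp (-(u ^ 2) / (2 * r ^ 2)) * Real.exp (u ^ 2 / (2 * r ^ 2)) = 1 := by
    rw [← Real.exp_add, neg_div, neg_add_cancel, Real.exp_zero]
  have h3 := Real.exp_pos (-(u ^ 2) / (2 * r ^ 2))
  have h4 : u ^ 2 / (2 * r ^ 2) * Real.exp (-(u ^ 2) / (2 * r ^ 2)) ≤ 1 := by nlinarith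
  calc (u / r ^ 2) ^ 2 * Real.exp (-(u ^ 2) / (2 * r ^ 2))
      = 2 / r ^ 2 * (u ^ 2 / (2 * r ^ 2) * Real.exp (-(u ^ 2) / (2 * r ^ 2))) := by
        field_simp
    _ ≤ 2 / r ^ 2 * 1 := by gcongr
    _ = 2 / r ^ 2 := mul_one _

lemma gaussDeriv_bdd {r : ℝ} (hr : 0 < r) : ∃ C, ∀ u, ‖gaussDeriv r u‖ ≤ C := by
  refine ⟨1 / Real.sqrt (2 * Real.pi * r ^ 2) + 2 / r ^ 2 / Real.sqrt (2 * Real.pi * r ^ 2),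
    fun u => ?_⟩
  have h1 := gaussPdf_bdd (r := r) u
  have h2 := gaussSq_bdd hr u
  refine le_trans ?_ (add_le_add h1 h2)
  have hg := (gaussPdf_pos hr u).le
  have h3 : ‖gaussDeriv r u‖ = |u / r ^ 2| * gaussPdf r u := by
    rw [gaussDeriv, norm_mul, Real.norm_of_nonneg hg, norm_neg, Real.norm_eq_abs]
  have h4 : ‖gaussSq r u‖ = |u / r ^ 2| ^ 2 * gaussPdf r u := by
    rw [gaussSq, norm_mul, Real.norm_of_nonneg hg, norm_pow, Real.norm_eq_abs]
  rw [h3, h4, Real.norm_of_nonneg hg]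
  nlinarith [sq_nonneg (|u / r ^ 2| - 1 / 2)]

/-- A Gaussian of standard deviation `r` has mass at least `1 / 3` in `[-r, r]`. -/
lemma third_le_integral_gaussPdf {r : ℝ} (hr : 0 < r) :
    1 / 3 ≤ ∫ u, (Icc (-r) r).indicator (gaussPdf r) u := by
  have hc : 1 / (6 * r) = ((1 : ℝ) / 2) / (3 * r) := by field_simp; norm_num
  have key : ∀ u ∈ Icc (-r) r, 1 / (6 * r) ≤ gaussPdf r u := by
    intro u hu
    have hu2 : u ^ 2 ≤ r ^ 2 := sq_le_sq' hu.1 hu.2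
    have h1 : (1 : ℝ) / 2 ≤ Real.exp (-(u ^ 2) / (2 * r ^ 2)) := by
      refine le_trans ?_ (Real.add_one_le_exp _)
      rw [neg_div]
      have : u ^ 2 / (2 * r ^ 2) ≤ 1 / 2 := by
        rw [div_le_iff₀ (by positivity)]; linarith
      linarith
    have h2 : Real.sqrt (2 * Real.pi * r ^ 2) ≤ 3 * r := by
      rw [Real.sqrt_le_left (by positivity)]
      nlinarith [Real.pi_lt_four, sq_pos_of_pos hr]
    rw [hc]
    unfold gaussPdf
    have : 0 < Real.sqrt (2 * Real.pi * r ^ 2) := by positivity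
    gcongr
  rw [integral_indicator measurableSet_Icc]
  calc (1 : ℝ) / 3 = ∫ _ in Icc (-r) r, 1 / (6 * r) := by
        rw [setIntegral_const]
        simp only [measureReal_def, Real.volume_Icc, smul_eq_mul]
        rw [ENNReal.toReal_ofReal (by linarith)]
        field_simp; norm_num
    _ ≤ ∫ u in Icc (-r) r, gaussPdf r u := by
        refine setIntegral_mono_on ?_ (integrable_gaussPdf r).integrableOn measurableSet_Icc key
        exact integrableOn_const (by simp)

/-! ### Regularity of the smoothed density -/

lemma integrable_mul_comp_sub {f G : ℝ → ℝ} (hf : Integrable f) (hG : Continuous G) {C : ℝ}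
    (hC : ∀ u, ‖G u‖ ≤ C) (x : ℝ) : Integrable fun y => f y * G (x - y) := by
  refine (hf.bdd_mul (f := fun y => G (x - y)) (c := C) ?_ ?_).congr ?_
  · exact (hG.comp (continuous_const.sub continuous_id)).aestronglyMeasurable
  · exact Eventually.of_forall fun y => hC _
  · exact Eventually.of_forall fun y => mul_comm _ _

/-- The convolution of two integrable functions, written as an explicit integral. -/
lemma integrable_conv {f G : ℝ → ℝ} (hf : Integrable f) (hG : Integrable G) :
    Integrable fun x => ∫ y, f y * G (x - y) :=
  hf.integrable_convolution (ContinuousLinearMap.mul ℝ ℝ) hG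

lemma integral_conv {f G : ℝ → ℝ} (hf : Integrable f) (hG : Integrable G) :
    ∫ x, ∫ y, f y * G (x - y) = (∫ y, f y) * ∫ u, G u :=
  integral_convolution (ContinuousLinearMap.mul ℝ ℝ) hf hG

/-- The derivative of the smoothed density, as the convolution of `f` with the derivative of the
Gaussian. -/
def smoothedDeriv (f : ℝ → ℝ) (r x : ℝ) : ℝ := ∫ y, f y * gaussDeriv r (x - y)

lemma hasDerivAt_smoothed {f : ℝ → ℝ} (hf : Integrable f) {r : ℝ} (hr : 0 < r) (x : ℝ) :
    HasDerivAt (smoothed f r) (smoothedDeriv f r x) x := by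
  obtain ⟨C, hC⟩ := gaussDeriv_bdd hr
  refine (hasDerivAt_integral_of_dominated_loc_of_deriv_le (μ := volume)
    (F := fun x y => f y * gaussPdf r (x - y)) (F' := fun x y => f y * gaussDeriv r (x - y))
    (bound := fun y => ‖f y‖ * C) univ_mem ?_ ?_ ?_ ?_ ?_ ?_).2
  · exact Eventually.of_forall fun z =>
      (integrable_mul_comp_sub hf (continuous_gaussPdf r) gaussPdf_bdd z).aestronglyMeasurable
  · exact integrable_mul_comp_sub hf (continuous_gaussPdf r) gaussPdf_bdd x
  · exact (integrable_mul_comp_sub hf (continuous_gaussDeriv r) hC x).aestronglyMeasurable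
  · refine Eventually.of_forall fun y z _ => ?_
    rw [norm_mul]
    exact mul_le_mul_of_nonneg_left (hC _) (norm_nonneg _)
  · exact hf.norm.mul_const C
  · refine Eventually.of_forall fun y z _ => ?_
    have h := (hasDerivAt_gaussPdf hr (z - y)).comp z ((hasDerivAt_id z).sub_const y)
    simpa using h.const_mul (f y)

lemma smoothed_pos {f : ℝ → ℝ} (hf : IsDensity f) {r : ℝ} (hr : 0 < r) (x : ℝ) :
    0 < smoothed f r x := by
  obtain ⟨h0, hi, h1⟩ := hf
  have hnn : ∀ y, 0 ≤ f y * gaussPdf r (x - y) :=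
    fun y => mul_nonneg (h0 y) (gaussPdf_pos hr _).le
  have hs : (Function.support fun y => f y * gaussPdf r (x - y)) = Function.support f := by
    ext y
    simp [(gaussPdf_pos hr (x - y)).ne']
  unfold smoothed
  rw [integral_pos_iff_support_of_nonneg hnn
    (integrable_mul_comp_sub hi (continuous_gaussPdf r) gaussPdf_bdd x), hs,
    ← integral_pos_iff_support_of_nonneg h0 hi, h1]
  exact one_pos

/-- Cauchy–Schwarz for the measure `f(y) gaussPdf r (x - y) dy`, applied to the functions `1` and
`(x - y) / r²`. -/
lemma sq_smoothedDeriv_le {f : ℝ → ℝ} (hf : IsDensity f) {r : ℝ} (hr : 0 < r) (x : ℝ) :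
    smoothedDeriv f r x ^ 2 ≤ smoothed f r x * ∫ y, f y * gaussSq r (x - y) := by
  obtain ⟨C, hC⟩ := gaussDeriv_bdd hr
  have i0 := integrable_mul_comp_sub hf.2.1 (continuous_gaussPdf r) gaussPdf_bdd x
  have i1 := integrable_mul_comp_sub hf.2.1 (continuous_gaussDeriv r) hC x
  have i2 := integrable_mul_comp_sub hf.2.1 (continuous_gaussSq r) (gaussSq_bdd hr) x
  have key : ∀ t : ℝ, 0 ≤ smoothed f r x * (t * t) + (2 * smoothedDeriv f r x) * t
      + ∫ y, f y * gaussSq r (x - y) := by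
    intro t
    have h : 0 ≤ ∫ y, ((t * t) * (f y * gaussPdf r (x - y))
        + (2 * t) * (f y * gaussDeriv r (x - y)) + f y * gaussSq r (x - y)) := by
      refine integral_nonneg fun y => ?_
      have : (t * t) * (f y * gaussPdf r (x - y))
        + (2 * t) * (f y * gaussDeriv r (x - y)) + f y * gaussSq r (x - y)
        = f y * gaussPdf r (x - y) * (t - (x - y) / r ^ 2) ^ 2 := by
        unfold gaussDeriv gaussSq; ring
      rw [Pi.zero_apply, this]
      exact mul_nonneg (mul_nonneg (hf.1 y) (gaussPdf_pos hr _).le) (sq_nonneg _)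
    rw [integral_add (by exact (i0.const_mul _).add (i1.const_mul _)) i2,
      integral_add (i0.const_mul _) (i1.const_mul _), integral_const_mul,
      integral_const_mul] at h
    unfold smoothed smoothedDeriv
    linarith
  have := discrim_le_zero key
  unfold discrim at this
  linarith

lemma score_eq {f : ℝ → ℝ} (hf : IsDensity f) {r : ℝ} (hr : 0 < r) (x : ℝ) :
    score f r x = smoothedDeriv f r x / smoothed f r x := by
  unfold score
  exact congrArg (· / _) (hasDerivAt_smoothed hf.2.1 hr x).deriv

/-- The Fisher information of the smoothed density is finite. -/
lemma integrable_score_sq {f : ℝ → ℝ} (hf : IsDensity f) {r : ℝ} (hr : 0 < r) :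
    Integrable fun x => score f r x ^ 2 * smoothed f r x := by
  have hg := integrable_conv hf.2.1 (integrable_gaussPdf r)
  have hg' := integrable_conv hf.2.1 (integrable_gaussDeriv hr)
  have hk := integrable_conv hf.2.1 (integrable_gaussSq hr)
  refine hk.mono' ?_ (Eventually.of_forall fun x => ?_)
  · have h1 : AEStronglyMeasurable (smoothed f r) volume := hg.aestronglyMeasurable
    have h2 : AEStronglyMeasurable (smoothedDeriv f r) volume := hg'.aestronglyMeasurable
    have h3 : AEStronglyMeasurable (score f r) volume := by
      have : score f r = fun x => smoothedDeriv f r x / smoothed f r x :=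
        funext (score_eq hf hr)
      rw [this]
      exact (h2.aemeasurable.div h1.aemeasurable).aestronglyMeasurable
    exact (h3.pow 2).mul h1
  · have hp := smoothed_pos hf hr x
    rw [Real.norm_of_nonneg (by positivity), score_eq hf hr]
    have : (smoothedDeriv f r x / smoothed f r x) ^ 2 * smoothed f r x
        = smoothedDeriv f r x ^ 2 / smoothed f r x := by field_simp
    rw [this, div_le_iff₀ hp, mul_comm]
    exact sq_smoothedDeriv_le hf hr x

/-! ### Quartiles -/

/-- The quartiles are ordered and at least half of the mass of `f` lies between them. -/
lemma quartiles {f : ℝ → ℝ} (hf : IsDensity f) :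
    quantile f (1 / 4) ≤ quantile f (3 / 4) ∧
      1 / 2 ≤ ∫ y in Icc (quantile f (1 / 4)) (quantile f (3 / 4)), f y := by
  obtain ⟨h0, hi, h1⟩ := hf
  set F : ℝ → ℝ := fun t => ∫ x in Iic t, f x with hF
  have hsub : ∀ a b : ℝ, F b - F a = ∫ x in a..b, f x := fun a b =>
    intervalIntegral.integral_Iic_sub_Iic hi.integrableOn hi.integrableOn
  have hcont : Continuous F := by
    have : F = fun t => F 0 + ∫ x in (0 : ℝ)..t, f x := by
      ext t; rw [← hsub]; ring
    rw [this]
    exact continuous_const.add (hi.continuous_primitive 0)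
  have hmono : Monotone F := fun a b hab =>
    setIntegral_mono_set hi.integrableOn (Eventually.of_forall h0)
      (Iic_subset_Iic.2 hab).eventuallyLE
  have htop : Tendsto F atTop (𝓝 1) := by
    rw [← h1]
    exact (aecover_Iic tendsto_id).integral_tendsto_of_countably_generated hi
  have hbot : Tendsto F atBot (𝓝 0) := by
    exact tendsto_integral_Iic_zero (f := f) tendsto_id
  have hne : ∀ p : ℝ, p < 1 → {t : ℝ | p ≤ F t}.Nonempty := fun p hp =>
    (htop.eventually (eventually_ge_nhds hp)).exists
  have hbdd : ∀ p : ℝ, 0 < p → BddBelow {t : ℝ | p ≤ F t} := by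
    intro p hp
    obtain ⟨a, ha⟩ := (hbot.eventually (gt_mem_nhds hp)).exists
    refine ⟨a, fun t ht => ?_⟩
    by_contra hlt
    have := hmono (not_le.1 hlt).le
    have ht' : p ≤ F t := ht
    linarith
  have hclosed : ∀ p : ℝ, IsClosed {t : ℝ | p ≤ F t} := fun p =>
    isClosed_le continuous_const hcont
  have hq3 : 3 / 4 ≤ F (quantile f (3 / 4)) :=
    (hclosed _).csInf_mem (hne _ (by norm_num)) (hbdd _ (by norm_num))
  have hq1 : F (quantile f (1 / 4)) ≤ 1 / 4 := by
    refine le_of_tendsto (hcont.continuousWithinAt (s := Iio (quantile f (1 / 4)))).tendsto ?_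
    filter_upwards [self_mem_nhdsWithin] with t ht
    exact (not_le.1 (notMem_of_lt_csInf (s := {t : ℝ | 1 / 4 ≤ F t}) ht
      (hbdd _ (by norm_num)))).le
  have hle : quantile f (1 / 4) ≤ quantile f (3 / 4) :=
    csInf_le_csInf (hbdd _ (by norm_num)) (hne _ (by norm_num))
      fun t (ht : 3 / 4 ≤ F t) => show 1 / 4 ≤ F t by linarith
  refine ⟨hle, ?_⟩
  rw [integral_Icc_eq_integral_Ioc, ← intervalIntegral.integral_of_le hle, ← hsub]
  linarith

/-- The smoothed density dominates a function of integral at least `1 / 6` which is supported in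
the interquartile interval enlarged by `r`: the convolution of `f` restricted to the interquartile
interval with the Gaussian restricted to `[-r, r]`. -/
lemma exists_bump {f : ℝ → ℝ} (hf : IsDensity f) {r : ℝ} (hr : 0 < r) :
    ∃ k : ℝ → ℝ, Integrable k ∧ 1 / 6 ≤ ∫ x, k x ∧ (∀ x, k x ≤ smoothed f r x) ∧ (∀ x, 0 ≤ k x) ∧
      ∀ x, x ∉ Icc (quantile f (1 / 4) - r) (quantile f (3 / 4) + r) → k x = 0 := by
  obtain ⟨hle, hmass⟩ := quartiles hf
  set a := quantile f (1 / 4)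
  set b := quantile f (3 / 4)
  have hb : Integrable ((Icc a b).indicator f) := hf.2.1.indicator measurableSet_Icc
  have he : Integrable ((Icc (-r) r).indicator (gaussPdf r)) :=
    (integrable_gaussPdf r).indicator measurableSet_Icc
  have hb0 : ∀ y, 0 ≤ (Icc a b).indicator f y := fun y => indicator_nonneg (fun y _ => hf.1 y) y
  have he0 : ∀ u, 0 ≤ (Icc (-r) r).indicator (gaussPdf r) u :=
    fun u => indicator_nonneg (fun u _ => (gaussPdf_pos hr u).le) u
  refine ⟨fun x => ∫ y, (Icc a b).indicator f y * (Icc (-r) r).indicator (gaussPdf r) (x - y),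
    integrable_conv hb he, ?_, ?_, ?_, ?_⟩
  · rw [integral_conv hb he, integral_indicator measurableSet_Icc]
    have := third_le_integral_gaussPdf hr
    nlinarith
  · intro x
    refine integral_mono_of_nonneg (Eventually.of_forall fun y => mul_nonneg (hb0 y) (he0 _))
      (integrable_mul_comp_sub hf.2.1 (continuous_gaussPdf r) gaussPdf_bdd x)
      (Eventually.of_forall fun y => ?_)
    exact mul_le_mul (indicator_le_self' (fun y _ => hf.1 y) y)
      (indicator_le_self' (fun u _ => (gaussPdf_pos hr u).le) _) (he0 _) (hf.1 y)
  · exact fun x => integral_nonneg fun y => mul_nonneg (hb0 y) (he0 _)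
  · intro x hx
    refine integral_eq_zero_of_ae (Eventually.of_forall fun y => ?_)
    by_cases hy : y ∈ Icc a b
    · have : x - y ∉ Icc (-r) r := fun h =>
        hx ⟨by linarith [h.1, hy.1], by linarith [h.2, hy.2]⟩
      simp [indicator_of_notMem this]
    · simp [indicator_of_notMem hy]

/-! ### The test function -/

/-- Integration by parts against a bounded test function with bounded derivative. -/
lemma integral_smoothed_mul_deriv {f : ℝ → ℝ} (hf : IsDensity f) {r : ℝ} (hr : 0 < r)
    {φ φ' : ℝ → ℝ} (hφ : ∀ x, HasDerivAt φ (φ' x) x) (hφ' : Continuous φ') {A B : ℝ}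
    (hA : ∀ x, ‖φ x‖ ≤ A) (hB : ∀ x, ‖φ' x‖ ≤ B) :
    Integrable (fun x => smoothedDeriv f r x * φ x) ∧
      Integrable (fun x => smoothed f r x * φ' x) ∧
      ∫ x, smoothed f r x * φ' x = - ∫ x, smoothedDeriv f r x * φ x := by
  have hg : Integrable (smoothed f r) := integrable_conv hf.2.1 (integrable_gaussPdf r)
  have hg' : Integrable (smoothedDeriv f r) := integrable_conv hf.2.1 (integrable_gaussDeriv hr)
  have hc : Continuous φ := continuous_iff_continuousAt.2 fun x => (hφ x).continuousAt
  have i1 : Integrable (fun x => smoothedDeriv f r x * φ x) :=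
    hg'.mul_bdd (c := A) hc.aestronglyMeasurable (Eventually.of_forall hA)
  have i2 : Integrable (fun x => smoothed f r x * φ' x) :=
    hg.mul_bdd (c := B) hφ'.aestronglyMeasurable (Eventually.of_forall hB)
  have i3 : Integrable (fun x => smoothed f r x * φ x) :=
    hg.mul_bdd (c := A) hc.aestronglyMeasurable (Eventually.of_forall hA)
  exact ⟨i1, i2, integral_mul_deriv_eq_deriv_mul_of_integrable
    (fun x _ => hasDerivAt_smoothed hf.2.1 hr x) (fun x _ => hφ x) i2 i1 i3⟩

/-- The variational lower bound for the Fisher information. -/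
lemma fisherInfo_ge {f : ℝ → ℝ} (hf : IsDensity f) {r : ℝ} (hr : 0 < r)
    {φ φ' : ℝ → ℝ} (hφ : ∀ x, HasDerivAt φ (φ' x) x) (hφ' : Continuous φ') {A B : ℝ}
    (hA : ∀ x, ‖φ x‖ ≤ A) (hB : ∀ x, ‖φ' x‖ ≤ B) (t : ℝ) :
    2 * t * (∫ x, smoothed f r x * φ' x) - t ^ 2 * A ^ 2 ≤ fisherInfo f r := by
  obtain ⟨i1, -, hibp⟩ := integral_smoothed_mul_deriv hf hr hφ hφ' hA hB
  have hg : Integrable (smoothed f r) := integrable_conv hf.2.1 (integrable_gaussPdf r)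
  have hg1 : ∫ x, smoothed f r x = 1 := by
    have := integral_conv hf.2.1 (integrable_gaussPdf r)
    rw [hf.2.2, integral_gaussPdf hr, one_mul] at this
    exact this
  have hlow : ∫ x, ((-(2 * t)) * (smoothedDeriv f r x * φ x) - t ^ 2 * A ^ 2 * smoothed f r x)
      ≤ fisherInfo f r := by
    refine integral_mono ((i1.const_mul _).sub (hg.const_mul _)) (integrable_score_sq hf hr)
      fun x => ?_
    have hp := smoothed_pos hf hr x
    have hs : smoothedDeriv f r x = score f r x * smoothed f r x := by
      rw [score_eq hf hr]; field_simp
    have hφA : φ x ^ 2 ≤ A ^ 2 := by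
      rw [← sq_abs]
      exact pow_le_pow_left₀ (abs_nonneg _) (hA x) 2
    have h1 : 0 ≤ (score f r x + t * φ x) ^ 2 * smoothed f r x := by positivity
    have h2 : 0 ≤ t ^ 2 * smoothed f r x * (A ^ 2 - φ x ^ 2) :=
      mul_nonneg (by positivity) (by linarith)
    simp only [hs]
    nlinarith
  rw [integral_sub (i1.const_mul _) (hg.const_mul _), integral_const_mul, integral_const_mul,
    hg1] at hlow
  rw [hibp]
  linarith

/-- There is a universal constant `c > 0` such that the Fisher information of any
`r`-smoothed density satisfies `I_r ≥ c / (IQR + r)²`. -/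
theorem fisherInfo_lower_bound :
    ∃ c : ℝ, 0 < c ∧ ∀ (f : ℝ → ℝ) (r : ℝ), IsDensity f → 0 < r →
      c / (iqr f + r) ^ 2 ≤ fisherInfo f r := by
  refine ⟨1 / 576, by norm_num, fun f r hf hr => ?_⟩
  obtain ⟨hle, -⟩ := quartiles hf
  obtain ⟨k, hki, hk1, hkle, hk0, hksupp⟩ := exists_bump hf hr
  set m := quantile f (1 / 4) with hm
  have hL : 0 < iqr f + r := by unfold iqr; linarith
  have hb : quantile f (3 / 4) + r = m + (iqr f + r) := by unfold iqr; ring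
  have hrL : r ≤ iqr f + r := by unfold iqr; linarith
  set L := iqr f + r
  have hφ : ∀ x, HasDerivAt (fun x => Real.arctan ((x - m) / L))
      (1 / (1 + ((x - m) / L) ^ 2) * (1 / L)) x := fun x =>
    (((hasDerivAt_id x).sub_const m).div_const L).arctan
  have hφ' : Continuous fun x : ℝ => 1 / (1 + ((x - m) / L) ^ 2) * (1 / L) := by
    refine Continuous.mul (continuous_const.div (by fun_prop) fun x => ?_) continuous_const
    positivity
  have hA : ∀ x, ‖Real.arctan ((x - m) / L)‖ ≤ 2 := fun x => by
    have h1 := Real.neg_pi_div_two_lt_arctan ((x - m) / L)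
    have h2 := Real.arctan_lt_pi_div_two ((x - m) / L)
    have h3 := Real.pi_lt_four
    rw [Real.norm_eq_abs, abs_le]
    constructor <;> linarith
  have hB : ∀ x, ‖1 / (1 + ((x - m) / L) ^ 2) * (1 / L)‖ ≤ 1 / L := fun x => by
    rw [Real.norm_of_nonneg (by positivity)]
    refine mul_le_of_le_one_left (by positivity) ?_
    rw [div_le_one (by positivity)]
    linarith [sq_nonneg ((x - m) / L)]
  obtain ⟨-, i2, -⟩ := integral_smoothed_mul_deriv hf hr hφ hφ' hA hB
  have hκ : 1 / (12 * L) ≤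
      ∫ x, smoothed f r x * (1 / (1 + ((x - m) / L) ^ 2) * (1 / L)) := by
    calc 1 / (12 * L) = 1 / 6 * (1 / (2 * L)) := by field_simp; norm_num
      _ ≤ (∫ x, k x) * (1 / (2 * L)) := by gcongr
      _ = ∫ x, k x * (1 / (2 * L)) := (integral_mul_const _ _).symm
      _ ≤ _ := by
        refine integral_mono (hki.mul_const _) i2 fun x => ?_
        by_cases hx : x ∈ Icc (m - r) (quantile f (3 / 4) + r)
        · refine mul_le_mul (hkle x) ?_ (by positivity) (smoothed_pos hf hr x).le
          have hx2 : ((x - m) / L) ^ 2 ≤ 1 := by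
            rw [div_pow, div_le_one (by positivity)]
            exact sq_le_sq' (by linarith [hx.1]) (by linarith [hx.2])
          calc 1 / (2 * L) = 1 / 2 * (1 / L) := by field_simp
            _ ≤ 1 / (1 + ((x - m) / L) ^ 2) * (1 / L) := by gcongr; linarith
        · have hp := smoothed_pos hf hr x
          simp only [hksupp x hx, zero_mul]
          positivity
  -- `t = 1 / (48 L)` maximizes the lower bound `2 t / (12 L) - 4 t²`.
  have hmain := fisherInfo_ge hf hr hφ hφ' hA hB (1 / (48 * L))
  refine le_trans ?_ hmain
  have h3 : 2 * (1 / (48 * L)) * (1 / (12 * L)) ≤ 2 * (1 / (48 * L)) *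
      ∫ x, smoothed f r x * (1 / (1 + ((x - m) / L) ^ 2) * (1 / L)) := by gcongr
  have h4 : 1 / 576 / L ^ 2 = 2 * (1 / (48 * L)) * (1 / (12 * L)) - (1 / (48 * L)) ^ 2 * 2 ^ 2 := by
    field_simp; norm_num
  linarith

end
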